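/- Let X be a real vector space, Z a nonempty set, φ : Z × X → Z with φ(z,0) = z for all z, and g : Z → EReal. Assume that for every z ∈ Z the concave function (g∘φ(z,·))^♯ is superdifferentiable at 0, i.e. ∂[(g∘φ(z,·))^♯](0) ≠ ∅. If Ag = g, then for every z ∈ Z there exists a linear functional ξ_z : X → ℝ such that g(φ(z,d)) ≤ g(z) + ξ_z(d) for all d ∈ X; consequently, under this superdifferentiability assumption, the fixed-point property Ag = g is equivalent to the existence of such functionals ξ_z for all z. -/

import Mathlib

/-- An `EReal`-valued function on a real vector space is concave
(with the convention `⊤ + ⊥ = ⊥` of `EReal`). -/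
def IsEConcave {X : Type*} [AddCommGroup X] [Module ℝ X] (ψ : X → EReal) : Prop :=
  ∀ x y : X, ∀ a b : ℝ, 0 ≤ a → 0 ≤ b → a + b = 1 →
    (a : EReal) * ψ x + (b : EReal) * ψ y ≤ ψ (a • x + b • y)

/-- The concave envelope `g^♯` of `g : X → EReal`: the pointwise infimum of all
concave functions dominating `g`. -/
noncomputable def concaveEnvelope {X : Type*} [AddCommGroup X] [Module ℝ X]
    (g : X → EReal) (x : X) : EReal :=
  ⨅ ψ : {ψ : X → EReal // IsEConcave ψ ∧ ∀ y, g y ≤ ψ y}, ψ.1 x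

/-- The operator `A`: `Ag(z) = (g ∘ φ(z,·))^♯(0)`. -/
noncomputable def Aop {X Z : Type*} [AddCommGroup X] [Module ℝ X]
    (φ : Z → X → Z) (g : Z → EReal) : Z → EReal :=
  fun z => concaveEnvelope (fun d => g (φ z d)) 0

/-!
An affine function of slope `ξ` through `(x₀, h x₀)` that dominates `h` is itself one of the concave
competitors defining `h^♯`, so it forces `h^♯ x₀ = h x₀`. Conversely, since `h ≤ h^♯`, a
supergradient of `h^♯` at a point where the two functions agree is a supergradient of `h`.
-/

section ConcaveEnvelope

variable {X : Type*} [AddCommGroup X] [Module ℝ X] {h : X → EReal}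

theorem isEConcave_const_add_coe {f : X → ℝ} (hf : ConcaveOn ℝ Set.univ f) (c : EReal) :
    IsEConcave fun x => c + (f x : EReal) := by
  intro x y a b ha hb hab
  have hfab : a * f x + b * f y ≤ f (a • x + b • y) :=
    hf.2 (Set.mem_univ x) (Set.mem_univ y) ha hb hab
  calc (a : EReal) * (c + f x) + b * (c + f y)
      = (a * c + b * c) + (a * f x + b * f y) := by
        rw [EReal.left_distrib_of_nonneg_of_ne_top (EReal.coe_nonneg.2 ha) (EReal.coe_ne_top a),
          EReal.left_distrib_of_nonneg_of_ne_top (EReal.coe_nonneg.2 hb) (EReal.coe_ne_top b),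
          add_add_add_comm]
    _ = c + ((a * f x + b * f y : ℝ) : EReal) := by
        rw [← EReal.right_distrib_of_nonneg (EReal.coe_nonneg.2 ha) (EReal.coe_nonneg.2 hb),
          ← EReal.coe_add, hab, EReal.coe_one, one_mul]
        norm_cast
    _ ≤ c + f (a • x + b • y) := by gcongr

theorem le_concaveEnvelope (h : X → EReal) (x : X) : h x ≤ concaveEnvelope h x :=
  le_iInf fun ψ => ψ.2.2 x

theorem IsEConcave.concaveEnvelope_le {ψ : X → EReal} (hψ : IsEConcave ψ) (hle : ∀ y, h y ≤ ψ y)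
    (x : X) : concaveEnvelope h x ≤ ψ x :=
  iInf_le (fun ψ : {ψ : X → EReal // IsEConcave ψ ∧ ∀ y, h y ≤ ψ y} => ψ.1 x) ⟨ψ, hψ, hle⟩

/-- Membership of `ξ` in the supergradient `∂h(x₀)`: the affine function of slope `ξ` through
`(x₀, h x₀)` dominates `h`. The function `h` need not be concave, and `h x₀` may be infinite. -/
def IsSupergradientAt (h : X → EReal) (x₀ : X) (ξ : X →ₗ[ℝ] ℝ) : Prop :=
  ∀ x, h x ≤ h x₀ + (ξ (x - x₀) : EReal)

theorem isSupergradientAt_zero_iff {ξ : X →ₗ[ℝ] ℝ} :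
    IsSupergradientAt h 0 ξ ↔ ∀ x, h x ≤ h 0 + (ξ x : EReal) := by
  simp only [IsSupergradientAt, sub_zero]

theorem IsSupergradientAt.concaveEnvelope_le {x₀ : X} {ξ : X →ₗ[ℝ] ℝ}
    (hξ : IsSupergradientAt h x₀ ξ) (x : X) :
    concaveEnvelope h x ≤ h x₀ + (ξ (x - x₀) : EReal) := by
  have hconc : ConcaveOn ℝ Set.univ fun x => ξ (x - x₀) := by
    simp only [map_sub]
    exact (ξ.concaveOn convex_univ).sub (convexOn_const (ξ x₀) convex_univ)
  exact (isEConcave_const_add_coe hconc (h x₀)).concaveEnvelope_le hξ x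

theorem IsSupergradientAt.concaveEnvelope_eq {x₀ : X} {ξ : X →ₗ[ℝ] ℝ}
    (hξ : IsSupergradientAt h x₀ ξ) : concaveEnvelope h x₀ = h x₀ :=
  le_antisymm (by simpa using hξ.concaveEnvelope_le x₀) (le_concaveEnvelope h x₀)

theorem IsSupergradientAt.of_concaveEnvelope {x₀ : X} {ξ : X →ₗ[ℝ] ℝ}
    (hξ : IsSupergradientAt (concaveEnvelope h) x₀ ξ) (heq : concaveEnvelope h x₀ = h x₀) :
    IsSupergradientAt h x₀ ξ := fun x =>
  calc h x ≤ concaveEnvelope h x := le_concaveEnvelope h x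
    _ ≤ concaveEnvelope h x₀ + ξ (x - x₀) := hξ x
    _ = h x₀ + ξ (x - x₀) := by rw [heq]

theorem concaveEnvelope_eq_iff_exists_isSupergradientAt {x₀ : X}
    (hsup : ∃ ξ, IsSupergradientAt (concaveEnvelope h) x₀ ξ) :
    concaveEnvelope h x₀ = h x₀ ↔ ∃ ξ, IsSupergradientAt h x₀ ξ :=
  ⟨fun heq => hsup.imp fun _ hξ => hξ.of_concaveEnvelope heq,
    fun ⟨_, hξ⟩ => hξ.concaveEnvelope_eq⟩

end ConcaveEnvelope

/-- If for every `z` the concave envelope `(g∘φ(z,·))^♯` is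
superdifferentiable at `0`, then `Ag = g` holds if and only if for every `z` there is a
linear functional `ξ_z : X → ℝ` with `g(φ(z,d)) ≤ g(z) + ξ_z(d)` for all `d`. -/
theorem Aop_fixed_iff_gradientIneq {X Z : Type*} [AddCommGroup X] [Module ℝ X] [Nonempty Z]
    (φ : Z → X → Z) (hφ : ∀ z, φ z 0 = z) (g : Z → EReal)
    (hsup : ∀ z : Z, ∃ ξ : X →ₗ[ℝ] ℝ, ∀ d : X,
      concaveEnvelope (fun e => g (φ z e)) d ≤
        concaveEnvelope (fun e => g (φ z e)) 0 + ((ξ d : ℝ) : EReal)) :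
    Aop φ g = g ↔
      ∀ z : Z, ∃ ξ : X →ₗ[ℝ] ℝ, ∀ d : X, g (φ z d) ≤ g z + ((ξ d : ℝ) : EReal) := by
  simp only [← isSupergradientAt_zero_iff] at hsup
  rw [funext_iff]
  refine forall_congr' fun z => ?_
  have henv := concaveEnvelope_eq_iff_exists_isSupergradientAt (hsup z)
  simpa only [Aop, isSupergradientAt_zero_iff, hφ] using henv
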